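/- Every function f : ℚ ∩ [0,1] → ℝ is Baire-one (a pointwise limit of continuous functions on ℚ ∩ [0,1]) and piecewise continuous (ℚ ∩ [0,1] is an increasing countable union of closed subsets on each of which f is continuous). -/

import Mathlib

/-!
Exhaust the countable domain by an increasing sequence of finite sets. Finite sets are closed and
discrete, so every function is continuous on each of them; Tietze's theorem extends these
restrictions to continuous functions, and at each point the extensions are eventually equal to
the given function.
-/

open Set Filter Topology

def IsFSigma {X : Type*} [TopologicalSpace X] (s : Set X) : Prop :=
  ∃ F : ℕ → Set X, (∀ n, IsClosed (F n)) ∧ s = ⋃ n, F n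

def FirstBorelClass {X Y : Type*} [TopologicalSpace X] [TopologicalSpace Y] (f : X → Y) : Prop :=
  ∀ U : Set Y, IsOpen U → IsFSigma (f ⁻¹' U)

section PiecewiseContinuous

variable {X Y : Type*} [TopologicalSpace X] [TopologicalSpace Y]

/-- A Baire-one function, i.e. a pointwise limit of a sequence of continuous functions. -/
def BaireOne (f : X → Y) : Prop :=
  ∃ fₙ : ℕ → X → Y, (∀ n, Continuous (fₙ n)) ∧ ∀ x, Tendsto (fun n => fₙ n x) atTop (𝓝 (f x))

/-- A piecewise continuous function: the domain is an increasing union of a sequence of closed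
sets on each of which the function is continuous. `ContinuousOn` expresses
continuity of the restriction to a piece. -/
def PiecewiseContinuous (f : X → Y) : Prop :=
  ∃ H : ℕ → Set X, Monotone H ∧ (∀ n, IsClosed (H n)) ∧ (⋃ n, H n) = univ ∧
    ∀ n, ContinuousOn f (H n)

theorem piecewiseContinuous_of_countable [Countable X] [T1Space X] (f : X → Y) :
    PiecewiseContinuous f :=
  let K := (countable_univ (α := X)).finiteExhaustion
  ⟨K, fun _ _ => K.mono, fun n => (K.finite n).isClosed, K.iUnion_eq,
    fun n => (K.finite n).continuousOn f⟩

end PiecewiseContinuous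

section Tietze

universe u v

variable {X : Type u} {Y : Type v} [TopologicalSpace X] [TopologicalSpace Y]
  [TietzeExtension.{u, v} Y]

theorem exists_continuous_eqOn_of_isClosed [NormalSpace X] {f : X → Y} {s : Set X}
    (hf : ContinuousOn f s) (hs : IsClosed s) : ∃ g : X → Y, Continuous g ∧ EqOn g f s := by
  obtain ⟨g, hg⟩ := ContinuousMap.exists_restrict_eq hs ⟨s.domRestrict f, hf.domRestrict⟩
  exact ⟨g, g.continuous, fun x hx => DFunLike.congr_fun hg ⟨x, hx⟩⟩

theorem PiecewiseContinuous.baireOne [NormalSpace X] {f : X → Y} (hf : PiecewiseContinuous f) :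
    BaireOne f := by
  obtain ⟨H, H_mono, H_closed, H_cover, f_cont⟩ := hf
  choose g g_cont g_eq using fun n => exists_continuous_eqOn_of_isClosed (f_cont n) (H_closed n)
  refine ⟨g, g_cont, fun x => ?_⟩
  obtain ⟨N, hN⟩ := iUnion_eq_univ_iff.mp H_cover x
  have eventually_eq : ∀ᶠ n in atTop, g n x = f x :=
    (eventually_ge_atTop N).mono fun n hn => g_eq n (H_mono hn hN)
  exact tendsto_nhds_of_eventually_eq eventually_eq

theorem rational_domain_baire_one_piecewise_general [Countable X] [T3Space X] (f : X → Y) :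
    BaireOne f ∧ PiecewiseContinuous f :=
  have hf := piecewiseContinuous_of_countable f
  -- A countable regular space is Lindelöf, hence normal, so Tietze applies to `X`.
  ⟨hf.baireOne, hf⟩

end Tietze

theorem rational_domain_baire_one_piecewise
    (f : {x : ℝ // x ∈ Set.Icc (0:ℝ) 1 ∧ ∃ q : ℚ, (q : ℝ) = x} → ℝ) :
    (∃ fₙ : ℕ → {x : ℝ // x ∈ Set.Icc (0:ℝ) 1 ∧ ∃ q : ℚ, (q : ℝ) = x} → ℝ,
      (∀ n, Continuous (fₙ n)) ∧ ∀ x, Tendsto (fun n => fₙ n x) atTop (𝓝 (f x))) ∧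
    (∃ H : ℕ → Set {x : ℝ // x ∈ Set.Icc (0:ℝ) 1 ∧ ∃ q : ℚ, (q : ℝ) = x},
      Monotone H ∧ (∀ n, IsClosed (H n)) ∧ (⋃ n, H n) = univ ∧
      ∀ n, ContinuousOn f (H n)) := by
  have : Countable {x : ℝ // x ∈ Set.Icc (0:ℝ) 1 ∧ ∃ q : ℚ, (q : ℝ) = x} :=
    ((countable_range ((↑) : ℚ → ℝ)).mono fun _ hx => hx.2).to_subtype
  exact rational_domain_baire_one_piecewise_general f
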